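/- Let k ≥ 1 be an integer. Then (s − k)·Σ_{m∈ℤ^k} (1 + ‖m‖²)^(−s/2) tends to k·π^(k/2)/Γ(k/2 + 1) as the real parameter s tends to k from the right. (The constant k·π^(k/2)/Γ(k/2+1) is the surface volume Vol_{k−1}(S^{k−1}) of the unit sphere in ℝ^k.) -/

import Mathlib

open Filter

/-!
Let `w ≥ 1` be a weight with `h(t) = #{w ≤ t} / t ^ d → l`. Writing `w ^ (-(d + ε))` as
`(d + ε) / ε` times the integral of `v ^ (d / ε)` over `0 < v ≤ w ^ (-ε)` and summing under the
integral sign gives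
`ε ∑ w ^ (-(d + ε)) = (d + ε) ∫_0^1 h(v ^ (-1 / ε)) dv`.
Since `v ^ (-1 / ε) → ∞` as `ε → 0⁺` for every `0 < v < 1`, dominated convergence shows that the
residue of `∑ w ^ (-s)` at `s = d` is `d * l`.

For `w x = √(1 + ‖x‖ ^ 2)` on a lattice of rank `d`, the points with `w ≤ R` are those in the ball
of radius `√(R ^ 2 - 1) ~ R`, so `l` is the volume of the unit ball divided by the covolume.
-/

section AbelianTheorem

open MeasureTheory Set Topology

/-- If the integrals on the right are not summable, both sides take the junk value `0`. -/
lemma integral_tsum_of_nonneg {α β : Type*} [Countable α] [MeasurableSpace β] {μ : Measure β}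
    {f : α → β → ℝ} (hf : ∀ i, Integrable (f i) μ) (hf_nonneg : ∀ i, 0 ≤ᵐ[μ] f i)
    (hf_sum : ∀ᵐ x ∂μ, Summable fun i => f i x) :
    ∫ x, ∑' i, f i x ∂μ = ∑' i, ∫ x, f i x ∂μ := by
  have h_finite : ∀ᵐ x ∂μ, ∑' i, ENNReal.ofReal (f i x) < ⊤ :=
    hf_sum.mono fun x hx => hx.tsum_ofReal_lt_top
  have h_toReal : ∀ᵐ x ∂μ, ∑' i, f i x = (∑' i, ENNReal.ofReal (f i x)).toReal := by
    filter_upwards [ae_all_iff.2 hf_nonneg] with x hx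
    rw [ENNReal.tsum_toReal_eq fun i => ENNReal.ofReal_ne_top]
    exact tsum_congr fun i => (ENNReal.toReal_ofReal (hx i)).symm
  have h_meas : ∀ i, AEMeasurable (fun x => ENNReal.ofReal (f i x)) μ :=
    fun i => (hf i).aemeasurable.ennreal_ofReal
  rw [integral_congr_ae h_toReal, integral_toReal (.tsum h_meas) h_finite,
    lintegral_tsum h_meas, ENNReal.tsum_toReal_eq fun i => (hf i).lintegral_lt_top.ne]
  exact tsum_congr fun i =>
    (integral_eq_lintegral_of_nonneg_ae (hf_nonneg i) (hf i).aestronglyMeasurable).symm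

lemma tendsto_setIntegral_comp_rpow_neg_inv {h : ℝ → ℝ} {l C : ℝ} (hh : Measurable h)
    (hC : ∀ t, 1 ≤ t → |h t| ≤ C) (hl : Tendsto h atTop (𝓝 l)) :
    Tendsto (fun ε : ℝ => ∫ v in Ioc (0 : ℝ) 1, h (v ^ (-ε⁻¹))) (𝓝[>] 0) (𝓝 l) := by
  simp only [integral_Ioc_eq_integral_Ioo]
  have hlim : ∀ v ∈ Ioo (0 : ℝ) 1, Tendsto (fun ε : ℝ => h (v ^ (-ε⁻¹))) (𝓝[>] 0) (𝓝 l) := by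
    rintro v ⟨hv0, hv1⟩
    simp only [Real.rpow_neg hv0.le, ← Real.inv_rpow hv0.le]
    exact hl.comp ((tendsto_rpow_atTop_of_base_gt_one _ (one_lt_inv_iff₀.2 ⟨hv0, hv1⟩)).comp
      tendsto_inv_nhdsGT_zero)
  have hbound : ∀ᶠ ε : ℝ in 𝓝[>] 0, ∀ v ∈ Ioo (0 : ℝ) 1, ‖h (v ^ (-ε⁻¹))‖ ≤ C := by
    filter_upwards [self_mem_nhdsWithin] with ε hε v hv
    exact hC _ (Real.one_le_rpow_of_pos_of_le_one_of_nonpos hv.1 hv.2.le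
      (neg_nonpos.2 (inv_nonneg.2 (le_of_lt hε))))
  suffices Tendsto (fun ε : ℝ => ∫ v in Ioo (0 : ℝ) 1, h (v ^ (-ε⁻¹))) (𝓝[>] 0)
      (𝓝 (∫ _ in Ioo (0 : ℝ) 1, l)) by simpa using this
  refine tendsto_integral_filter_of_dominated_convergence (fun _ => C) ?_ ?_ (by simp) ?_
  · exact .of_forall fun ε => (hh.comp (measurable_id.pow_const _)).aestronglyMeasurable
  · exact hbound.mono fun ε hε => ae_restrict_of_forall_mem measurableSet_Ioo hε
  · exact ae_restrict_of_forall_mem measurableSet_Ioo hlim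

lemma exists_abs_div_rpow_le {f : ℝ → ℝ} {d l : ℝ} (hd : 0 ≤ d) (hf : Monotone f)
    (hf_nonneg : ∀ t, 0 ≤ f t) (hl : Tendsto (fun t => f t / t ^ d) atTop (𝓝 l)) :
    ∃ C, ∀ t, 1 ≤ t → |f t / t ^ d| ≤ C := by
  obtain ⟨T, hT⟩ := eventually_atTop.1 (hl.eventually_le_const (lt_add_one l))
  refine ⟨max (l + 1) (f T), fun t ht => ?_⟩
  have ht_pow : 1 ≤ t ^ d := Real.one_le_rpow ht hd
  rw [abs_of_nonneg (div_nonneg (hf_nonneg t) (by positivity))]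
  rcases le_total T t with hTt | htT
  · exact (hT t hTt).trans (le_max_left _ _)
  · exact (div_le_self (hf_nonneg t) ht_pow).trans ((hf htT).trans (le_max_right _ _))

lemma setIntegral_Ioc_rpow_eq {x d ε : ℝ} (hx : 0 < x) (hdε : 0 < d + ε) (hε : 0 < ε) :
    ∫ v in Ioc 0 (x ^ (-ε)), v ^ (d / ε) = ε / (d + ε) * x ^ (-(d + ε)) := by
  have h_exp : d / ε + 1 = (d + ε) / ε := by field_simp
  have h_exp_gt : -1 < d / ε := by rw [lt_div_iff₀ hε]; linarith
  rw [← intervalIntegral.integral_of_le (by positivity), integral_rpow (.inl h_exp_gt), h_exp,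
    Real.zero_rpow (div_pos hdε hε).ne', sub_zero, ← Real.rpow_mul hx.le]
  field_simp

variable {α : Type*} {w : α → ℝ}

lemma monotone_ncard_sublevel (hfin : ∀ t, {i | w i ≤ t}.Finite) :
    Monotone fun t => ({i | w i ≤ t}.ncard : ℝ) := fun _ u htu =>
  Nat.cast_le.2 (ncard_le_ncard (fun _ hi => le_trans hi htu) (hfin u))

lemma countable_of_finite_sublevel (hfin : ∀ t, {i | w i ≤ t}.Finite) : Countable α := by
  have hcover : ⋃ n : ℕ, {i | w i ≤ n} = univ :=
    eq_univ_of_forall fun i => mem_iUnion.2 (exists_nat_ge (w i))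
  exact countable_univ_iff.1 (hcover ▸ countable_iUnion fun n : ℕ => (hfin n).countable)

lemma setIntegral_indicator_Iic_rpow {x d ε : ℝ} (hx : 1 ≤ x) (hdε : 0 < d + ε) (hε : 0 < ε) :
    ∫ v in Ioc 0 1, (Iic (x ^ (-ε))).indicator (· ^ (d / ε)) v =
      ε / (d + ε) * x ^ (-(d + ε)) := by
  rw [setIntegral_indicator measurableSet_Iic, Ioc_inter_Iic,
    min_eq_right (Real.rpow_le_one_of_one_le_of_nonpos hx (neg_nonpos.2 hε.le)),
    setIntegral_Ioc_rpow_eq (by linarith) hdε hε]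

lemma hasSum_indicator_Iic_rpow {d ε v : ℝ} (hw : ∀ i, 0 < w i) (hfin : ∀ t, {i | w i ≤ t}.Finite)
    (hε : 0 < ε) (hv : 0 < v) :
    HasSum (fun i => (Iic (w i ^ (-ε))).indicator (· ^ (d / ε)) v)
      ({i | w i ≤ v ^ (-ε⁻¹)}.ncard / (v ^ (-ε⁻¹)) ^ d) := by
  have h_indicator : (fun i => (Iic (w i ^ (-ε))).indicator (· ^ (d / ε)) v) =
      {i | w i ≤ v ^ (-ε⁻¹)}.indicator fun _ => v ^ (d / ε) := by
    ext i
    refine indicator_eq_indicator ?_ rfl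
    rw [← inv_neg]
    exact (Real.le_rpow_inv_iff_of_neg (hw i) hv (neg_lt_zero.2 hε)).symm
  have h_weight : v ^ (d / ε) = ((v ^ (-ε⁻¹)) ^ d)⁻¹ := by
    rw [← Real.rpow_mul hv.le, ← Real.rpow_neg hv.le]
    congr 1
    ring
  have : Fintype {i | w i ≤ v ^ (-ε⁻¹)} := (hfin _).fintype
  have h_const := hasSum_fintype fun _ : {i | w i ≤ v ^ (-ε⁻¹)} => v ^ (d / ε)
  rw [Finset.sum_const, Finset.card_univ, ← Nat.card_eq_fintype_card, Nat.card_coe_set_eq,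
    nsmul_eq_mul, h_weight, ← div_eq_mul_inv] at h_const
  rw [h_indicator, ← hasSum_subtype_iff_indicator, h_weight]
  exact h_const

lemma mul_tsum_rpow_neg_eq_setIntegral {d ε : ℝ} (hw : ∀ i, 1 ≤ w i)
    (hfin : ∀ t, {i | w i ≤ t}.Finite) (hdε : 0 < d + ε) (hε : 0 < ε) :
    ε * ∑' i, w i ^ (-(d + ε)) =
      (d + ε) * ∫ v in Ioc (0 : ℝ) 1, {i | w i ≤ v ^ (-ε⁻¹)}.ncard / (v ^ (-ε⁻¹)) ^ d := by
  have := countable_of_finite_sublevel hfin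
  have h_sum : ∀ v ∈ Ioc (0 : ℝ) 1, HasSum (fun i => (Iic (w i ^ (-ε))).indicator (· ^ (d / ε)) v)
      ({i | w i ≤ v ^ (-ε⁻¹)}.ncard / (v ^ (-ε⁻¹)) ^ d) := fun v hv =>
    hasSum_indicator_Iic_rpow (fun i => zero_lt_one.trans_le (hw i)) hfin hε hv.1
  have h_integrable : IntegrableOn (· ^ (d / ε)) (Ioc (0 : ℝ) 1) :=
    (intervalIntegral.intervalIntegrable_rpow' (by rw [lt_div_iff₀ hε]; linarith)).1
  calc ε * ∑' i, w i ^ (-(d + ε))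
      = (d + ε) * ∑' i, ∫ v in Ioc 0 1, (Iic (w i ^ (-ε))).indicator (· ^ (d / ε)) v := by
        simp only [setIntegral_indicator_Iic_rpow (hw _) hdε hε, tsum_mul_left]
        field_simp
    _ = (d + ε) * ∫ v in Ioc 0 1, ∑' i, (Iic (w i ^ (-ε))).indicator (· ^ (d / ε)) v := by
        rw [integral_tsum_of_nonneg]
        · exact fun i => h_integrable.indicator measurableSet_Iic
        · exact fun i => ae_restrict_of_forall_mem measurableSet_Ioc fun v hv =>
            indicator_apply_nonneg fun _ => Real.rpow_nonneg hv.1.le _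
        · exact ae_restrict_of_forall_mem measurableSet_Ioc fun v hv => (h_sum v hv).summable
    _ = _ := by
        rw [setIntegral_congr_fun measurableSet_Ioc fun v hv => (h_sum v hv).tsum_eq]

theorem tendsto_sub_mul_tsum_rpow_neg {d l : ℝ} (hw : ∀ i, 1 ≤ w i)
    (hfin : ∀ t, {i | w i ≤ t}.Finite) (hd : 0 ≤ d)
    (hl : Tendsto (fun t => {i | w i ≤ t}.ncard / t ^ d) atTop (𝓝 l)) :
    Tendsto (fun s => (s - d) * ∑' i, w i ^ (-s)) (𝓝[>] d) (𝓝 (d * l)) := by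
  have h_mono := monotone_ncard_sublevel hfin
  obtain ⟨C, hC⟩ := exists_abs_div_rpow_le hd h_mono (fun _ => Nat.cast_nonneg _) hl
  have h_meas : Measurable fun t : ℝ => {i | w i ≤ t}.ncard / t ^ d :=
    h_mono.measurable.div (measurable_id.pow_const d)
  have h_integral := tendsto_setIntegral_comp_rpow_neg_inv h_meas hC hl
  have h_sub : Tendsto (fun s => s - d) (𝓝[>] d) (𝓝[>] 0) := by
    have h := ((continuous_sub_right d).continuousWithinAt (s := Ioi d) (x := d)).tendsto_nhdsWithin
      (t := Ioi 0) fun s hs => sub_pos.2 hs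
    rwa [sub_self] at h
  have h_id : Tendsto (fun s : ℝ => s) (𝓝[>] d) (𝓝 d) := nhdsWithin_le_nhds
  refine (h_id.mul (h_integral.comp h_sub)).congr' ?_
  filter_upwards [self_mem_nhdsWithin] with s hs
  have h_eq := mul_tsum_rpow_neg_eq_setIntegral hw hfin
    (add_pos_of_nonneg_of_pos hd (sub_pos.2 hs)) (sub_pos.2 hs)
  simpa only [add_sub_cancel, Function.comp_apply] using h_eq.symm

end AbelianTheorem

section LatticePointCount

open MeasureTheory Metric Module Set Topology

lemma tendsto_sqrt_sq_sub_one_atTop : Tendsto (fun R : ℝ => √(R ^ 2 - 1)) atTop atTop :=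
  Real.tendsto_sqrt_atTop.comp
    (tendsto_atTop_add_const_right _ (-1) (tendsto_pow_atTop two_ne_zero))

lemma tendsto_sqrt_sq_sub_one_div : Tendsto (fun R : ℝ => √(R ^ 2 - 1) / R) atTop (𝓝 1) := by
  have h_inv : Tendsto (fun R : ℝ => 1 - (R ^ 2)⁻¹) atTop (𝓝 1) := by
    simpa using (tendsto_inv_atTop_zero.comp (tendsto_pow_atTop two_ne_zero)).const_sub (1 : ℝ)
  have h_sqrt := h_inv.sqrt
  rw [Real.sqrt_one] at h_sqrt
  refine h_sqrt.congr' ?_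
  filter_upwards [eventually_gt_atTop 0] with R hR
  have h_div : 1 - (R ^ 2)⁻¹ = (R ^ 2 - 1) / R ^ 2 := by field_simp
  rw [h_div, Real.sqrt_div' _ (sq_nonneg R), Real.sqrt_sq hR.le]

lemma sqrt_one_add_sq_le_iff {a R : ℝ} (ha : 0 ≤ a) (hR : 1 ≤ R) :
    √(1 + a ^ 2) ≤ R ↔ a ≤ √(R ^ 2 - 1) := by
  rw [Real.sqrt_le_left (by linarith), Real.le_sqrt ha (by nlinarith), le_sub_iff_add_le']

lemma finite_norm_le {E : Type*} [NormedAddCommGroup E] [ProperSpace E] (L : Submodule ℤ E)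
    [DiscreteTopology L] (R : ℝ) : {x : L | ‖x‖ ≤ R}.Finite := by
  have h_closed : IsClosed (L : Set E) := @AddSubgroup.isClosed_of_discrete _ _ _ _ _
    L.toAddSubgroup (inferInstanceAs (DiscreteTopology L))
  have h_inter := finite_isBounded_inter_isClosed DiscreteTopology.isDiscrete
    (isBounded_closedBall (x := (0 : E)) (r := R)) h_closed
  refine (h_inter.preimage Subtype.val_injective.injOn).subset fun x hx => ⟨?_, x.2⟩
  exact mem_closedBall_zero_iff.2 hx

variable {E : Type*} [NormedAddCommGroup E] [InnerProductSpace ℝ E] [FiniteDimensional ℝ E]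
  [Nontrivial E] [MeasurableSpace E] [BorelSpace E]
  (L : Submodule ℤ E) [DiscreteTopology L] [IsZLattice ℝ L]

lemma volume_real_closedBall_one :
    volume.real (closedBall (0 : E) 1) =
      Real.pi ^ (finrank ℝ E / 2 : ℝ) / Real.Gamma (finrank ℝ E / 2 + 1) := by
  have hΓ : 0 ≤ Real.Gamma (finrank ℝ E / 2 + 1) := Real.Gamma_nonneg_of_nonneg (by positivity)
  rw [measureReal_def, InnerProductSpace.volume_closedBall,
    Real.rpow_div_two_eq_sqrt _ Real.pi_nonneg, Real.rpow_natCast, ENNReal.ofReal_one, one_pow,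
    one_mul, ENNReal.toReal_ofReal (div_nonneg (by positivity) hΓ)]

lemma tendsto_ncard_norm_le_div_pow :
    Tendsto (fun R : ℝ => {x : L | ‖x‖ ≤ R}.ncard / R ^ finrank ℝ E) atTop
      (𝓝 (volume.real (closedBall (0 : E) 1) / ZLattice.covolume L)) := by
  have h_dim : finrank ℝ E ≠ 0 := finrank_pos.ne'
  have h_unit : {x ∈ univ | ‖x‖ ^ finrank ℝ E ≤ 1} = closedBall (0 : E) 1 := by
    ext x
    simp [pow_le_one_iff_of_nonneg (norm_nonneg x) h_dim]
  have h_count := ZLattice.covolume.tendsto_card_le_div' L (X := univ)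
    (F := fun x => ‖x‖ ^ finrank ℝ E) (by simp)
    (fun x r hr => by rw [norm_smul, Real.norm_of_nonneg hr, mul_pow])
    (h_unit ▸ isBounded_closedBall) (h_unit ▸ measurableSet_closedBall)
    (h_unit ▸ (convex_closedBall 0 1).addHaar_frontier volume)
  rw [h_unit] at h_count
  refine (h_count.comp (tendsto_pow_atTop h_dim)).congr' ?_
  filter_upwards [eventually_ge_atTop 0] with R hR
  have h_image : {x ∈ univ | ‖x‖ ^ finrank ℝ E ≤ R ^ finrank ℝ E} ∩ L =
      ((↑) : L → E) '' {x : L | ‖x‖ ≤ R} := by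
    ext x
    simp [pow_le_pow_iff_left₀ (norm_nonneg _) hR h_dim, and_comm]
  rw [Function.comp_apply, h_image, Nat.card_coe_set_eq,
    ncard_image_of_injective _ Subtype.val_injective]

lemma tendsto_ncard_sqrt_one_add_norm_sq_le_div_pow :
    Tendsto (fun R : ℝ => {x : L | √(1 + ‖x‖ ^ 2) ≤ R}.ncard / R ^ finrank ℝ E) atTop
      (𝓝 (volume.real (closedBall (0 : E) 1) / ZLattice.covolume L)) := by
  have h := ((tendsto_ncard_norm_le_div_pow L).comp tendsto_sqrt_sq_sub_one_atTop).mul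
    (tendsto_sqrt_sq_sub_one_div.pow (finrank ℝ E))
  rw [one_pow, mul_one] at h
  refine h.congr' ?_
  filter_upwards [eventually_gt_atTop 1] with R hR
  have hR_sqrt : 0 < √(R ^ 2 - 1) := Real.sqrt_pos.2 (by nlinarith)
  simp only [Function.comp_apply, sqrt_one_add_sq_le_iff (norm_nonneg _) hR.le]
  rw [div_pow, div_mul_div_cancel₀ (by positivity)]

theorem zeta_residue_at_k_general :
    Tendsto (fun s : ℝ => (s - finrank ℝ E) * ∑' x : L, (1 + ‖x‖ ^ 2) ^ (-(s / 2)))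
      (𝓝[>] (finrank ℝ E : ℝ))
      (𝓝 (finrank ℝ E * Real.pi ^ (finrank ℝ E / 2 : ℝ) / Real.Gamma (finrank ℝ E / 2 + 1) /
        ZLattice.covolume L)) := by
  have h_finite : ∀ R, {x : L | √(1 + ‖x‖ ^ 2) ≤ R}.Finite := fun R =>
    (finite_norm_le L R).subset fun x (hx : √(1 + ‖x‖ ^ 2) ≤ R) =>
      (Real.le_sqrt_of_sq_le (le_add_of_nonneg_left zero_le_one)).trans hx
  have h_count := tendsto_ncard_sqrt_one_add_norm_sq_le_div_pow L
  simp only [← Real.rpow_natCast _ (finrank ℝ E), volume_real_closedBall_one] at h_count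
  have h_residue := tendsto_sub_mul_tsum_rpow_neg
    (fun x : L => Real.one_le_sqrt.2 (le_add_of_nonneg_right (sq_nonneg ‖x‖)))
    h_finite (Nat.cast_nonneg _) h_count
  simp_rw [← mul_div_assoc] at h_residue
  refine h_residue.congr fun s => ?_
  congr! 3 with x
  rw [← Real.rpow_div_two_eq_sqrt _ (by positivity), neg_div]

end LatticePointCount

section OrthonormalLattice

open MeasureTheory Module Set Submodule

variable {ι E : Type*} [Fintype ι] [NormedAddCommGroup E] [InnerProductSpace ℝ E]
  (b : OrthonormalBasis ι ℝ E)

lemma covolume_span_orthonormalBasis [FiniteDimensional ℝ E] [MeasurableSpace E] [BorelSpace E] :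
    ZLattice.covolume (span ℤ (range b.toBasis)) = 1 := by
  rw [ZLattice.covolume_eq_measure_fundamentalDomain _ _
      (ZSpan.isAddFundamentalDomain b.toBasis volume),
    measureReal_congr (ZSpan.fundamentalDomain_ae_parallelepiped b.toBasis volume),
    measureReal_def, b.coe_toBasis, b.volume_parallelepiped, ENNReal.toReal_one]

lemma norm_sq_restrictScalars_equivFun_symm (m : ι → ℤ) :
    ‖((b.toBasis.restrictScalars ℤ).equivFun.symm m : E)‖ ^ 2 = ∑ j, (m j : ℝ) ^ 2 := by
  have h_coe : ((b.toBasis.restrictScalars ℤ).equivFun.symm m : E) =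
      b.repr.symm (WithLp.toLp 2 fun j => (m j : ℝ)) := by
    rw [Basis.equivFun_symm_apply, coe_sum, ← b.sum_repr_symm]
    refine Finset.sum_congr rfl fun j _ => ?_
    rw [coe_smul, Basis.restrictScalars_apply, b.coe_toBasis, Int.cast_smul_eq_zsmul]
  rw [h_coe, LinearIsometryEquiv.norm_map, EuclideanSpace.real_norm_sq_eq]

lemma tsum_span_orthonormalBasis (f : ℝ → ℝ) :
    ∑' x : span ℤ (range b.toBasis), f (‖x‖ ^ 2) = ∑' m : ι → ℤ, f (∑ j, (m j : ℝ) ^ 2) := by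
  rw [← (b.toBasis.restrictScalars ℤ).equivFun.symm.toEquiv.tsum_eq]
  exact tsum_congr fun m => congrArg f (norm_sq_restrictScalars_equivFun_symm b m)

end OrthonormalLattice

/-- As real `s → k⁺`, the quantity
`(s − k) · Σ_{m ∈ ℤ^k} (1 + ‖m‖²)^(−s/2)` tends to
`k·π^(k/2)/Γ(k/2 + 1) = Vol_{k−1}(S^{k−1})`, the surface volume of the unit
sphere in `ℝ^k`. -/
theorem zeta_residue_at_k (k : ℕ) (hk : 1 ≤ k) :
    Tendsto
      (fun s : ℝ => (s - k) * ∑' m : Fin k → ℤ,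
        (1 + ∑ j, ((m j : ℝ)) ^ 2) ^ (-(s / 2)))
      (nhdsWithin (k : ℝ) (Set.Ioi (k : ℝ)))
      (nhds ((k : ℝ) * Real.pi ^ ((k : ℝ) / 2) / Real.Gamma ((k : ℝ) / 2 + 1))) := by
  have : Nonempty (Fin k) := Fin.pos_iff_nonempty.1 hk
  let b := EuclideanSpace.basisFun (Fin k) ℝ
  have h := zeta_residue_at_k_general (Submodule.span ℤ (Set.range b.toBasis))
  rw [covolume_span_orthonormalBasis, div_one, finrank_euclideanSpace_fin] at h
  exact h.congr fun s => congrArg ((s - k) * ·)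
    (tsum_span_orthonormalBasis b fun q => (1 + q) ^ (-(s / 2)))
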